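/- arXiv:2207.07009 — 4 statements merged into one kernel-verified Lean document; each statement's English description precedes it below -/
import Mathlib

section
/- Under the adapted pure-frontal setup, assume H²−K ≥ 0 everywhere and for j = 1,2 let κ_j and V_j be as defined. Then at every point (u,v), the derivative of ν in the direction V_j equals −κ_j times the derivative of f in the direction V_j; explicitly, −v(M̃−κ_jF̃)·ν_u + (L̃−κ_jẼ)·ν_v = −κ_j·(−v(M̃−κ_jF̃)·f_u + (L̃−κ_jẼ)·f_v), i.e. dν(V_j) = −κ_j·df(V_j). -/
open Filter

noncomputable section

/-- Vectors in ℝ³, modeled as `Fin 3 → ℝ`. -/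
abbrev R3 : Type := Fin 3 → ℝ

/-- The Euclidean inner product on ℝ³. -/
def dot3 (a b : R3) : ℝ := a 0 * b 0 + a 1 * b 1 + a 2 * b 2

/-- The Euclidean norm on ℝ³. -/
def norm3 (a : R3) : ℝ := Real.sqrt (dot3 a a)

/-- Partial derivative in the `u`-direction. -/
def pu {E : Type*} [NormedAddCommGroup E] [NormedSpace ℝ E] (F : ℝ × ℝ → E) (p : ℝ × ℝ) : E :=
  fderiv ℝ F p (1, 0)

/-- Partial derivative in the `v`-direction. -/
def pv {E : Type*} [NormedAddCommGroup E] [NormedSpace ℝ E] (F : ℝ × ℝ → E) (p : ℝ × ℝ) : E :=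
  fderiv ℝ F p (0, 1)

/-- The adapted pure-frontal setup: `f` is a frontal with unit normal `ν`,
`f_v = v·h`, `ν_v = v·ν₁`, the frame `{f_u, h, ν}` is linearly independent everywhere
and orthonormal along the `u`-axis. -/
structure AdaptedPureFrontal (f ν h ν₁ : ℝ × ℝ → R3) : Prop where
  smooth_f : ContDiff ℝ (⊤ : ℕ∞) f
  smooth_ν : ContDiff ℝ (⊤ : ℕ∞) ν
  smooth_h : ContDiff ℝ (⊤ : ℕ∞) h
  smooth_ν₁ : ContDiff ℝ (⊤ : ℕ∞) ν₁
  unit_ν : ∀ p, dot3 (ν p) (ν p) = 1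
  orth_fu_ν : ∀ p, dot3 (pu f p) (ν p) = 0
  orth_fv_ν : ∀ p, dot3 (pv f p) (ν p) = 0
  fv_eq : ∀ p : ℝ × ℝ, pv f p = p.2 • h p
  νv_eq : ∀ p : ℝ × ℝ, pv ν p = p.2 • ν₁ p
  indep : ∀ p, LinearIndependent ℝ ![pu f p, h p, ν p]
  adapted_fu : ∀ u : ℝ, dot3 (pu f (u, 0)) (pu f (u, 0)) = 1
  adapted_h : ∀ u : ℝ, dot3 (h (u, 0)) (h (u, 0)) = 1
  adapted_fu_h : ∀ u : ℝ, dot3 (pu f (u, 0)) (h (u, 0)) = 0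
  adapted_h_ν : ∀ u : ℝ, dot3 (h (u, 0)) (ν (u, 0)) = 0

/-- Ẽ = ⟨f_u, f_u⟩. -/
def Et (f : ℝ × ℝ → R3) (p : ℝ × ℝ) : ℝ := dot3 (pu f p) (pu f p)

/-- F̃ = ⟨f_u, h⟩. -/
def Ft (f h : ℝ × ℝ → R3) (p : ℝ × ℝ) : ℝ := dot3 (pu f p) (h p)

/-- G̃ = ⟨h, h⟩. -/
def Gt (h : ℝ × ℝ → R3) (p : ℝ × ℝ) : ℝ := dot3 (h p) (h p)

/-- L̃ = −⟨f_u, ν_u⟩. -/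
def Lt (f ν : ℝ × ℝ → R3) (p : ℝ × ℝ) : ℝ := -dot3 (pu f p) (pu ν p)

/-- M̃ = −⟨h, ν_u⟩. -/
def Mt (h ν : ℝ × ℝ → R3) (p : ℝ × ℝ) : ℝ := -dot3 (h p) (pu ν p)

/-- Ñ₁ = −⟨h, ν₁⟩. -/
def Nt1 (h ν₁ : ℝ × ℝ → R3) (p : ℝ × ℝ) : ℝ := -dot3 (h p) (ν₁ p)

/-- The Gaussian curvature K = (L̃Ñ₁ − M̃²)/(ẼG̃ − F̃²). -/
def Kg (f ν h ν₁ : ℝ × ℝ → R3) (p : ℝ × ℝ) : ℝ :=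
  (Lt f ν p * Nt1 h ν₁ p - Mt h ν p ^ 2) / (Et f p * Gt h p - Ft f h p ^ 2)

/-- The mean curvature H = (ẼÑ₁ − 2F̃M̃ + G̃L̃)/(2(ẼG̃ − F̃²)). -/
def Hm (f ν h ν₁ : ℝ × ℝ → R3) (p : ℝ × ℝ) : ℝ :=
  (Et f p * Nt1 h ν₁ p - 2 * Ft f h p * Mt h ν p + Gt h p * Lt f ν p) /
    (2 * (Et f p * Gt h p - Ft f h p ^ 2))

/-- The principal curvature κ = H + ε√(H² − K); `ε = 1` gives κ₁ and `ε = -1` gives κ₂. -/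
def kap (f ν h ν₁ : ℝ × ℝ → R3) (ε : ℝ) (p : ℝ × ℝ) : ℝ :=
  Hm f ν h ν₁ p + ε * Real.sqrt (Hm f ν h ν₁ p ^ 2 - Kg f ν h ν₁ p)

/-- First component of the principal vector field V = −v(M̃ − κF̃)∂_u + (L̃ − κẼ)∂_v. -/
def V1c (f ν h ν₁ : ℝ × ℝ → R3) (ε : ℝ) (p : ℝ × ℝ) : ℝ :=
  -(p.2 * (Mt h ν p - kap f ν h ν₁ ε p * Ft f h p))

/-- Second component of the principal vector field V = −v(M̃ − κF̃)∂_u + (L̃ − κẼ)∂_v. -/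
def V2c (f ν h ν₁ : ℝ × ℝ → R3) (ε : ℝ) (p : ℝ × ℝ) : ℝ :=
  Lt f ν p - kap f ν h ν₁ ε p * Et f p

/-- Directional derivative of `g` along the principal vector field V. -/
def VD (f ν h ν₁ : ℝ × ℝ → R3) (ε : ℝ) {E : Type*} [NormedAddCommGroup E] [NormedSpace ℝ E]
    (g : ℝ × ℝ → E) (p : ℝ × ℝ) : E :=
  V1c f ν h ν₁ ε p • pu g p + V2c f ν h ν₁ ε p • pv g p

/-- The radius of principal curvature ρ = 1/κ. -/
def rho (f ν h ν₁ : ℝ × ℝ → R3) (ε : ℝ) (p : ℝ × ℝ) : ℝ := (kap f ν h ν₁ ε p)⁻¹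

/-- The focal surface C = f + ρ·ν. -/
def Cf (f ν h ν₁ : ℝ × ℝ → R3) (ε : ℝ) (p : ℝ × ℝ) : R3 :=
  f p + rho f ν h ν₁ ε p • ν p

/-- The normal direction x = −(M̃ − κF̃)·f_u + (L̃ − κẼ)·h of the focal surface. -/
def xj (f ν h ν₁ : ℝ × ℝ → R3) (ε : ℝ) (p : ℝ × ℝ) : R3 :=
  (-(Mt h ν p - kap f ν h ν₁ ε p * Ft f h p)) • pu f p +
    (Lt f ν p - kap f ν h ν₁ ε p * Et f p) • h p

/-- The unit normal e = x/‖x‖ of the focal surface. -/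
def ej (f ν h ν₁ : ℝ × ℝ → R3) (ε : ℝ) (p : ℝ × ℝ) : R3 :=
  (norm3 (xj f ν h ν₁ ε p))⁻¹ • xj f ν h ν₁ ε p

/-- The limiting normal curvature κ_ν(u) = L̃(u,0). -/
def kν (f ν : ℝ × ℝ → R3) (u : ℝ) : ℝ := Lt f ν (u, 0)

/-- The cuspidal torsion κ_t(u) = M̃(u,0). -/
def kt (h ν : ℝ × ℝ → R3) (u : ℝ) : ℝ := Mt h ν (u, 0)

/-- The bias r_b(u) = 3Ñ₁(u,0). -/
def rb (h ν₁ : ℝ × ℝ → R3) (u : ℝ) : ℝ := 3 * Nt1 h ν₁ (u, 0)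

/-- The secondary cuspidal curvature r_c(u) = 24((Ñ₁)_v − 2F̃_vM̃ − G̃_vÑ₁)(u,0). -/
def rc (f ν h ν₁ : ℝ × ℝ → R3) (u : ℝ) : ℝ :=
  24 * (pv (Nt1 h ν₁) (u, 0) - 2 * pv (Ft f h) (u, 0) * Mt h ν (u, 0) -
    pv (Gt h) (u, 0) * Nt1 h ν₁ (u, 0))

/-- The singular curvature κ_s(u) = ⟨f_uu, h⟩(u,0). -/
def ks (f h : ℝ × ℝ → R3) (u : ℝ) : ℝ := dot3 (pu (pu f) (u, 0)) (h (u, 0))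

/-- The rank of the differential of `F` at `p`. -/
def rankAt (F : ℝ × ℝ → R3) (p : ℝ × ℝ) : ℕ :=
  Module.finrank ℝ (LinearMap.range (fderiv ℝ F p).toLinearMap)

theorem dot3_fderiv (a b : ℝ × ℝ → R3) (p w : ℝ × ℝ) (ha : DifferentiableAt ℝ a p)
    (hb : DifferentiableAt ℝ b p) (c : ℝ) (hc : ∀ q, dot3 (a q) (b q) = c) :
    dot3 (fderiv ℝ a p w) (b p) + dot3 (a p) (fderiv ℝ b p w) = 0 := by
  have hA := fun i => (hasFDerivAt_pi'.1 ha.hasFDerivAt) i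
  have hB := fun i => (hasFDerivAt_pi'.1 hb.hasFDerivAt) i
  have h1 := (((hA 0).mul (hB 0)).add ((hA 1).mul (hB 1))).add ((hA 2).mul (hB 2))
  have h2 : HasFDerivAt (fun q => dot3 (a q) (b q)) (0 : ℝ × ℝ →L[ℝ] ℝ) p := by
    have : (fun q => dot3 (a q) (b q)) = fun _ => c := funext hc
    rw [this]; exact hasFDerivAt_const c p
  have h3 := congrArg (fun T : ℝ × ℝ →L[ℝ] ℝ => T w) (h1.unique h2)
  simp at h3
  unfold dot3
  linarith

theorem frame_det (x y z : R3) (hl : LinearIndependent ℝ ![x, y, z]) :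
    (Matrix.of ![x, y, z]).det ≠ 0 := by
  have : IsUnit (Matrix.of ![x, y, z]) := by
    rw [← Matrix.linearIndependent_rows_iff_isUnit]
    exact hl
  exact ((Matrix.isUnit_iff_isUnit_det _).1 this).ne_zero

theorem frame_zero (x y z w : R3) (hl : LinearIndependent ℝ ![x, y, z])
    (h1 : dot3 x w = 0) (h2 : dot3 y w = 0) (h3 : dot3 z w = 0) : w = 0 := by
  apply Matrix.eq_zero_of_mulVec_eq_zero (frame_det x y z hl)
  ext i
  fin_cases i <;> simp [Matrix.mulVec, dotProduct, Fin.sum_univ_three] <;>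
    unfold dot3 at h1 h2 h3 <;> assumption

theorem frame_gram (x y z : R3) (hl : LinearIndependent ℝ ![x, y, z])
    (h1 : dot3 x z = 0) (h2 : dot3 y z = 0) (h3 : dot3 z z = 1) :
    dot3 x x * dot3 y y - dot3 x y ^ 2 ≠ 0 := by
  intro h0
  apply frame_det x y z hl
  have key : (Matrix.of ![x, y, z]).det ^ 2 =
      (dot3 x x * dot3 y y - dot3 x y ^ 2) * dot3 z z
      - dot3 x x * dot3 y z ^ 2 - dot3 y y * dot3 x z ^ 2
      + 2 * dot3 x y * dot3 x z * dot3 y z := by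
    rw [Matrix.det_fin_three]
    simp [dot3]
    ring
  rw [h0, h1, h2] at key
  simpa using key

theorem mixed (f : ℝ × ℝ → R3) (hf : ContDiff ℝ (⊤ : ℕ∞) f) (p : ℝ × ℝ) :
    fderiv ℝ (pu f) p (0, 1) = fderiv ℝ (pv f) p (1, 0) := by
  have hd : DifferentiableAt ℝ (fderiv ℝ f) p :=
    ((hf.fderiv_right (m := 1) (by norm_cast)).differentiable (by norm_num)) p
  have hs : IsSymmSndFDerivAt ℝ f p :=
    hf.contDiffAt.isSymmSndFDerivAt (by
      rw [minSmoothness_of_isRCLikeNormedField]; exact WithTop.coe_le_coe.2 (le_top : (2 : ℕ∞) ≤ ⊤))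
  have e : ∀ a w : ℝ × ℝ, fderiv ℝ (fun q => fderiv ℝ f q a) p w = fderiv ℝ (fderiv ℝ f) p w a := by
    intro a w
    rw [fderiv_clm_apply hd (differentiableAt_const a)]
    simp
  unfold pu pv
  rw [e, e]
  exact hs _ _

theorem diff_dir (f : ℝ × ℝ → R3) (hf : ContDiff ℝ (⊤ : ℕ∞) f) (p a : ℝ × ℝ) :
    DifferentiableAt ℝ (fun q => fderiv ℝ f q a) p :=
  (((hf.fderiv_right (m := 1) (by norm_cast)).differentiable (by norm_num)) p).clm_apply
    (differentiableAt_const a)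

theorem dot3_smul_l (c : ℝ) (x y : R3) : dot3 (c • x) y = c * dot3 x y := by
  simp [dot3]; ring

theorem dot3_smul_r (c : ℝ) (x y : R3) : dot3 x (c • y) = c * dot3 x y := by
  simp [dot3]; ring

theorem dot3_add_r (x y z : R3) : dot3 x (y + z) = dot3 x y + dot3 x z := by
  simp [dot3]; ring

theorem dot3_comm' (x y : R3) : dot3 x y = dot3 y x := by
  simp [dot3]; ring

theorem stmt_1 (f ν h ν₁ : ℝ × ℝ → R3) (H : AdaptedPureFrontal f ν h ν₁)
    (hHK : ∀ p : ℝ × ℝ, Hm f ν h ν₁ p ^ 2 - Kg f ν h ν₁ p ≥ 0) :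
    ∀ ε : ℝ, (ε = 1 ∨ ε = -1) → ∀ p : ℝ × ℝ,
      V1c f ν h ν₁ ε p • pu ν p + V2c f ν h ν₁ ε p • pv ν p =
        (-(kap f ν h ν₁ ε p)) •
          (V1c f ν h ν₁ ε p • pu f p + V2c f ν h ν₁ ε p • pv f p) := by
  intro ε hε p
  rw [H.fv_eq, H.νv_eq]
  by_cases hv : p.2 = 0
  · simp [V1c, hv]
  have hνd : DifferentiableAt ℝ ν p := H.smooth_ν.differentiable (by simp) p
  have hhν : dot3 (h p) (ν p) = 0 := by
    have := H.orth_fv_ν p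
    rw [H.fv_eq, dot3_smul_l] at this
    exact (mul_eq_zero.1 this).resolve_left hv
  have hνuν : dot3 (ν p) (pu ν p) = 0 := by
    have := dot3_fderiv ν ν p (1, 0) hνd hνd 1 H.unit_ν
    rw [dot3_comm'] at this
    unfold pu; linarith
  have hν1ν : dot3 (ν p) (ν₁ p) = 0 := by
    have h1 := dot3_fderiv ν ν p (0, 1) hνd hνd 1 H.unit_ν
    rw [dot3_comm'] at h1
    have h2 : dot3 (ν p) (pv ν p) = 0 := by unfold pv; linarith
    rw [H.νv_eq, dot3_smul_r] at h2
    exact (mul_eq_zero.1 h2).resolve_left hv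
  have hsym : dot3 (pu f p) (ν₁ p) = dot3 (h p) (pu ν p) := by
    have h1 := dot3_fderiv (pu f) ν p (0, 1) (diff_dir f H.smooth_f p _) hνd 0 H.orth_fu_ν
    have h2 := dot3_fderiv (pv f) ν p (1, 0) (diff_dir f H.smooth_f p _) hνd 0 H.orth_fv_ν
    rw [mixed f H.smooth_f] at h1
    have h3 : dot3 (pu f p) (pv ν p) = dot3 (pv f p) (pu ν p) := by
      unfold pv pu at *; linarith
    rw [H.νv_eq, H.fv_eq, dot3_smul_r, dot3_smul_l] at h3
    exact mul_left_cancel₀ hv h3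
  have hD : Et f p * Gt h p - Ft f h p ^ 2 ≠ 0 :=
    frame_gram _ _ _ (H.indep p) (H.orth_fu_ν p) hhν (H.unit_ν p)
  have hk : kap f ν h ν₁ ε p ^ 2 - 2 * Hm f ν h ν₁ p * kap f ν h ν₁ ε p + Kg f ν h ν₁ p = 0 := by
    have hs := Real.sq_sqrt (hHK p)
    have he : ε ^ 2 = 1 := by rcases hε with rfl | rfl <;> norm_num
    unfold kap
    linear_combination ε ^ 2 * hs + (Hm f ν h ν₁ p ^ 2 - Kg f ν h ν₁ p) * he
  have hchar : (Mt h ν p - kap f ν h ν₁ ε p * Ft f h p) ^ 2 -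
      (Lt f ν p - kap f ν h ν₁ ε p * Et f p) * (Nt1 h ν₁ p - kap f ν h ν₁ ε p * Gt h p) = 0 := by
    have hK : Kg f ν h ν₁ p * (Et f p * Gt h p - Ft f h p ^ 2) =
        Lt f ν p * Nt1 h ν₁ p - Mt h ν p ^ 2 := div_mul_cancel₀ _ hD
    have hH : Hm f ν h ν₁ p * (2 * (Et f p * Gt h p - Ft f h p ^ 2)) =
        Et f p * Nt1 h ν₁ p - 2 * Ft f h p * Mt h ν p + Gt h p * Lt f ν p :=
      div_mul_cancel₀ _ (mul_ne_zero two_ne_zero hD)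
    linear_combination (-(Et f p * Gt h p - Ft f h p ^ 2)) * hk + hK - kap f ν h ν₁ ε p * hH
  have hνfu : dot3 (ν p) (pu f p) = 0 := by rw [dot3_comm']; exact H.orth_fu_ν p
  have hνh : dot3 (ν p) (h p) = 0 := by rw [dot3_comm']; exact hhν
  have hFc : dot3 (h p) (pu f p) = dot3 (pu f p) (h p) := dot3_comm' _ _
  rw [← sub_eq_zero, sub_eq_add_neg, ← neg_smul, neg_neg]
  apply frame_zero _ _ _ _ (H.indep p)
  · simp only [dot3_add_r, dot3_smul_r, hsym]
    unfold V1c V2c Lt Mt Et Ft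
    ring
  · simp only [dot3_add_r, dot3_smul_r, hFc]
    unfold V1c V2c
    unfold Lt Mt Nt1 Et Ft Gt at *
    linear_combination p.2 * hchar
  · simp only [dot3_add_r, dot3_smul_r, hνuν, hν1ν, hνfu, hνh]
    ring
end
end

section
/- Under the adapted pure-frontal setup, assume H²−K > 0 on a neighborhood of 0 (so κ₁, κ₂ are C^∞ and κ₁ ≠ κ₂) and κ_t(0) ≠ 0. Then for each j ∈ {1,2}: the origin 0 is both a V_j-ridge point and a V_{j+1}-sub-parabolic point (i.e. the directional derivatives satisfy (V_jκ_j)(0) = 0 and (V_{j+1}κ_j)(0) = 0, indices mod 2) if and only if r_c(0) = 0. -/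
open Filter

noncomputable section

theorem parseval3 (a b c : R3) (haa : dot3 a a = 1) (hbb : dot3 b b = 1) (hcc : dot3 c c = 1)
    (hab : dot3 a b = 0) (hac : dot3 a c = 0) (hbc : dot3 b c = 0) (x y : R3) :
    dot3 x y = dot3 x a * dot3 a y + dot3 x b * dot3 b y + dot3 x c * dot3 c y := by
  unfold dot3 at *
  have h1 : (!![a 0, a 1, a 2; b 0, b 1, b 2; c 0, c 1, c 2] : Matrix (Fin 3) (Fin 3) ℝ) *
      !![a 0, b 0, c 0; a 1, b 1, c 1; a 2, b 2, c 2] = 1 := by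
    ext i j
    fin_cases i <;> fin_cases j <;>
      simp [Matrix.mul_apply, Fin.sum_univ_three] <;> linarith
  have h2 := mul_eq_one_comm.mp h1
  have e : ∀ i j, _ := fun i j => congrFun (congrFun h2 i) j
  have e00 := e 0 0
  have e01 := e 0 1
  have e02 := e 0 2
  have e11 := e 1 1
  have e12 := e 1 2
  have e22 := e 2 2
  simp [Matrix.mul_apply, Fin.sum_univ_three] at e00 e01 e02 e11 e12 e22
  linear_combination -(x 0 * y 0) * e00 - (x 0 * y 1 + x 1 * y 0) * e01
    - (x 0 * y 2 + x 2 * y 0) * e02 - x 1 * y 1 * e11 - (x 1 * y 2 + x 2 * y 1) * e12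
    - x 2 * y 2 * e22

theorem hasDerivAt_pv {E : Type*} [NormedAddCommGroup E] [NormedSpace ℝ E] {g : ℝ × ℝ → E}
    (hg : DifferentiableAt ℝ g 0) : HasDerivAt (fun t : ℝ => g (0, t)) (pv g 0) 0 := by
  have h1 : HasDerivAt (fun t : ℝ => ((0 : ℝ), t)) ((0 : ℝ), (1 : ℝ)) 0 :=
    (hasDerivAt_const (0 : ℝ) (0 : ℝ)).prodMk (hasDerivAt_id (0 : ℝ))
  exact HasFDerivAt.comp_hasDerivAt (0 : ℝ) (f := fun t : ℝ => ((0 : ℝ), t))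
    (l := g) (l' := fderiv ℝ g 0) hg.hasFDerivAt h1

theorem contDiff_pu {g : ℝ × ℝ → R3} (hg : ContDiff ℝ (⊤ : ℕ∞) g) :
    ContDiff ℝ (⊤ : ℕ∞) (pu g) := by
  have : ContDiff ℝ (⊤ : ℕ∞) (fderiv ℝ g) := hg.fderiv_right (by simp)
  exact this.clm_apply contDiff_const

theorem contDiff_dot3 {a b : ℝ × ℝ → R3} (ha : ContDiff ℝ (⊤ : ℕ∞) a)
    (hb : ContDiff ℝ (⊤ : ℕ∞) b) : ContDiff ℝ (⊤ : ℕ∞) (fun p => dot3 (a p) (b p)) := by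
  unfold dot3
  have := contDiff_pi.mp ha
  have := contDiff_pi.mp hb
  fun_prop

theorem hasDerivAt_dot3 {a b : ℝ → R3} {a' b' : R3} {t : ℝ} (ha : HasDerivAt a a' t)
    (hb : HasDerivAt b b' t) :
    HasDerivAt (fun s => dot3 (a s) (b s)) (dot3 a' (b t) + dot3 (a t) b') t := by
  unfold dot3
  rw [hasDerivAt_pi] at ha hb
  refine HasDerivAt.congr_deriv ((((ha 0).mul (hb 0)).add ((ha 1).mul (hb 1))).add ((ha 2).mul (hb 2))) ?_
  ring

theorem pv_dot3 {a b : ℝ × ℝ → R3} (ha : ContDiff ℝ (⊤ : ℕ∞) a)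
    (hb : ContDiff ℝ (⊤ : ℕ∞) b) :
    pv (fun p => dot3 (a p) (b p)) 0 = dot3 (pv a 0) (b 0) + dot3 (a 0) (pv b 0) :=
  (hasDerivAt_pv ((contDiff_dot3 ha hb).differentiable (by simp) 0)).unique
    (hasDerivAt_dot3 (hasDerivAt_pv (ha.differentiable (by simp) 0))
      (hasDerivAt_pv (hb.differentiable (by simp) 0)))

theorem pv_pu_zero {g k : ℝ × ℝ → R3} (hg : ContDiff ℝ (⊤ : ℕ∞) g)
    (hk : ContDiff ℝ (⊤ : ℕ∞) k) (e : ∀ p : ℝ × ℝ, pv g p = p.2 • k p) :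
    pv (pu g) 0 = 0 := by
  have hd : DifferentiableAt ℝ (fderiv ℝ g) 0 :=
    (hg.fderiv_right (m := (⊤ : ℕ∞)) (by simp)).differentiable (by simp) 0
  have key : ∀ x y : ℝ × ℝ, fderiv ℝ (fun p => fderiv ℝ g p x) 0 y
      = fderiv ℝ (fderiv ℝ g) 0 y x := by
    intro x y
    have := (hd.hasFDerivAt.clm_apply (hasFDerivAt_const x (0 : ℝ × ℝ))).fderiv
    rw [this]; simp
  have hs : IsSymmSndFDerivAt ℝ g 0 :=
    hg.contDiffAt.isSymmSndFDerivAt (by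
      rw [minSmoothness_of_isRCLikeNormedField]; exact WithTop.coe_le_coe.mpr le_top)
  have h1 : pv (pu g) 0 = pu (pv g) 0 := by
    change fderiv ℝ (fun p => fderiv ℝ g p (1, 0)) 0 (0, 1)
      = fderiv ℝ (fun p => fderiv ℝ g p (0, 1)) 0 (1, 0)
    rw [key, key, hs.eq]
  rw [h1]
  have h2 : pv g = fun p : ℝ × ℝ => p.2 • k p := funext e
  have hkd : DifferentiableAt ℝ k 0 := hk.differentiable (by simp) 0
  rw [h2]
  unfold pu
  have h3 := ((hasFDerivAt_snd (𝕜 := ℝ) (E := ℝ) (F := ℝ) (p := (0 : ℝ × ℝ))).fun_smul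
    hkd.hasFDerivAt).fderiv
  rw [h3]
  simp

theorem quad_deriv {E F G L M N k : ℝ → ℝ} {E' F' G' L' M' N' k' : ℝ}
    (hE : HasDerivAt E E' 0) (hF : HasDerivAt F F' 0) (hG : HasDerivAt G G' 0)
    (hL : HasDerivAt L L' 0) (hM : HasDerivAt M M' 0) (hN : HasDerivAt N N' 0)
    (hk : HasDerivAt k k' 0)
    (hq : ∀ᶠ t in nhds (0 : ℝ), (L t - k t * E t) * (N t - k t * G t)
      - (M t - k t * F t) * (M t - k t * F t) = 0) :
    (L' - (k' * E 0 + k 0 * E')) * (N 0 - k 0 * G 0)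
      + (L 0 - k 0 * E 0) * (N' - (k' * G 0 + k 0 * G'))
      - 2 * (M 0 - k 0 * F 0) * (M' - (k' * F 0 + k 0 * F')) = 0 := by
  have h1 := ((hL.sub (hk.mul hE)).mul (hN.sub (hk.mul hG))).sub
    ((hM.sub (hk.mul hF)).mul (hM.sub (hk.mul hF)))
  have h2 := h1.congr_of_eventuallyEq (f₁ := fun _ => (0 : ℝ)) (by
    filter_upwards [hq] with t ht
    simpa using ht.symm)
  have h3 := h2.unique (hasDerivAt_const (0 : ℝ) (0 : ℝ))
  simp only [Pi.sub_apply, Pi.mul_apply] at h3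
  linear_combination h3

/-- assuming H²−K > 0 near 0 and κ_t(0) ≠ 0, the origin is both a
V_j-ridge point and a V_{j+1}-sub-parabolic point if and only if r_c(0) = 0. -/
theorem stmt_2 (f ν h ν₁ : ℝ × ℝ → R3) (H : AdaptedPureFrontal f ν h ν₁)
    (hHK : ∀ᶠ p in nhds (0 : ℝ × ℝ), Hm f ν h ν₁ p ^ 2 - Kg f ν h ν₁ p > 0)
    (hkt : kt h ν 0 ≠ 0) :
    ∀ ε : ℝ, (ε = 1 ∨ ε = -1) →
      ((VD f ν h ν₁ ε (kap f ν h ν₁ ε) 0 = 0 ∧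
          VD f ν h ν₁ (-ε) (kap f ν h ν₁ ε) 0 = 0) ↔
        rc f ν h ν₁ 0 = 0) := by
  intro ε hε
  have hε2 : ε ^ 2 = 1 := by rcases hε with h | h <;> rw [h] <;> norm_num
  have cfu := contDiff_pu H.smooth_f
  have cνu := contDiff_pu H.smooth_ν
  have cE : ContDiff ℝ (⊤ : ℕ∞) (Et f) := contDiff_dot3 cfu cfu
  have cF : ContDiff ℝ (⊤ : ℕ∞) (Ft f h) := contDiff_dot3 cfu H.smooth_h
  have cG : ContDiff ℝ (⊤ : ℕ∞) (Gt h) := contDiff_dot3 H.smooth_h H.smooth_h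
  have cL : ContDiff ℝ (⊤ : ℕ∞) (Lt f ν) := (contDiff_dot3 cfu cνu).neg
  have cM : ContDiff ℝ (⊤ : ℕ∞) (Mt h ν) := (contDiff_dot3 H.smooth_h cνu).neg
  have cN : ContDiff ℝ (⊤ : ℕ∞) (Nt1 h ν₁) := (contDiff_dot3 H.smooth_h H.smooth_ν₁).neg
  have dE := cE.differentiable (by simp) 0
  have dF := cF.differentiable (by simp) 0
  have dG := cG.differentiable (by simp) 0
  have dL := cL.differentiable (by simp) 0
  have dM := cM.differentiable (by simp) 0
  have dN := cN.differentiable (by simp) 0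
  have E0 : Et f 0 = 1 := H.adapted_fu 0
  have F0 : Ft f h 0 = 0 := H.adapted_fu_h 0
  have G0 : Gt h 0 = 1 := H.adapted_h 0
  have M0 : Mt h ν 0 ≠ 0 := hkt
  have fuv := pv_pu_zero H.smooth_f H.smooth_h H.fv_eq
  have νuv := pv_pu_zero H.smooth_ν H.smooth_ν₁ H.νv_eq
  have νv0 : pv ν 0 = 0 := by rw [H.νv_eq]; simp
  have z1 : ∀ x : R3, dot3 0 x = 0 := by intro x; simp [dot3]
  have z2 : ∀ x : R3, dot3 x 0 = 0 := by intro x; simp [dot3]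
  have sym : ∀ x y : R3, dot3 x y = dot3 y x := by intro x y; unfold dot3; ring
  have negpv : ∀ a b : ℝ × ℝ → R3, pv (fun p => -dot3 (a p) (b p)) 0
      = - pv (fun p => dot3 (a p) (b p)) 0 := by
    intro a b; unfold pv; rw [fderiv_fun_neg]; simp
  have hE' : pv (Et f) 0 = 0 := by
    have := pv_dot3 cfu cfu
    rw [fuv, z1, z2, add_zero] at this
    exact this
  have hL' : pv (Lt f ν) 0 = 0 := by
    have := pv_dot3 cfu cνu
    rw [fuv, νuv, z1, z2, add_zero] at this
    have h2 := negpv (pu f) (pu ν)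
    rw [this, neg_zero] at h2
    exact h2
  have hF' : pv (Ft f h) 0 = dot3 (pu f 0) (pv h 0) := by
    have := pv_dot3 cfu H.smooth_h
    rw [fuv, z1, zero_add] at this
    exact this
  have hG' : pv (Gt h) 0 = 2 * dot3 (h 0) (pv h 0) := by
    have := pv_dot3 H.smooth_h H.smooth_h
    rw [sym (pv h 0)] at this
    rw [two_mul]
    exact this
  have hM' : pv (Mt h ν) 0 = - dot3 (pv h 0) (pu ν 0) := by
    have := pv_dot3 H.smooth_h cνu
    rw [νuv, z2, add_zero] at this
    have h2 := negpv h (pu ν)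
    rw [this] at h2
    exact h2
  have hhν : ∀ p : ℝ × ℝ, dot3 (h p) (ν p) = 0 := by
    rintro ⟨u, v⟩
    by_cases hv : v = 0
    · subst hv; exact H.adapted_h_ν u
    · have := H.orth_fv_ν (u, v)
      rw [H.fv_eq] at this
      have h3 : v * dot3 (h (u, v)) (ν (u, v)) = 0 := by
        rw [← this]; simp [dot3]; ring
      exact (mul_eq_zero.mp h3).resolve_left hv
  have hhvν : dot3 (pv h 0) (ν 0) = 0 := by
    have := pv_dot3 H.smooth_h H.smooth_ν
    rw [νv0, z2, add_zero] at this
    rw [← this]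
    have h4 : (fun p => dot3 (h p) (ν p)) = fun _ => (0 : ℝ) := funext hhν
    rw [h4]; simp [pv]
  have hpars := parseval3 (pu f 0) (h 0) (ν 0) E0 G0 (H.unit_ν 0) F0 (H.orth_fu_ν 0) (hhν 0)
    (pv h 0) (pu ν 0)
  have L0 : Lt f ν 0 = - dot3 (pu f 0) (pu ν 0) := rfl
  have M0' : Mt h ν 0 = - dot3 (h 0) (pu ν 0) := rfl
  have hMv : pv (Mt h ν) 0 = Lt f ν 0 * pv (Ft f h) 0 + Mt h ν 0 * (pv (Gt h) 0 / 2) := by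
    rw [hM', hF', hG', L0, M0', hpars, hhvν, sym (pv h 0) (pu f 0), sym (pv h 0) (h 0)]
    ring
  -- nonvanishing denominators
  have D0 : Et f 0 * Gt h 0 - Ft f h 0 ^ 2 ≠ 0 := by rw [E0, F0, G0]; norm_num
  have cD : ContDiff ℝ (⊤ : ℕ∞) (fun p => Et f p * Gt h p - Ft f h p ^ 2) :=
    (cE.mul cG).sub (cF.pow 2)
  have hD : ∀ᶠ p in nhds (0 : ℝ × ℝ), Et f p * Gt h p - Ft f h p ^ 2 ≠ 0 :=
    cD.continuous.continuousAt.eventually_ne D0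
  have hquad : ∀ δ : ℝ, δ ^ 2 = 1 → ∀ p : ℝ × ℝ, Et f p * Gt h p - Ft f h p ^ 2 ≠ 0 →
      Hm f ν h ν₁ p ^ 2 - Kg f ν h ν₁ p > 0 →
      (Lt f ν p - kap f ν h ν₁ δ p * Et f p) * (Nt1 h ν₁ p - kap f ν h ν₁ δ p * Gt h p)
      - (Mt h ν p - kap f ν h ν₁ δ p * Ft f h p) *
        (Mt h ν p - kap f ν h ν₁ δ p * Ft f h p) = 0 := by
    intro δ hδ p hp hpos
    have hs := Real.sq_sqrt hpos.le
    have hk : kap f ν h ν₁ δ p ^ 2 - 2 * Hm f ν h ν₁ p * kap f ν h ν₁ δ p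
        + Kg f ν h ν₁ p = 0 := by
      unfold kap
      linear_combination δ ^ 2 * hs + (Hm f ν h ν₁ p ^ 2 - Kg f ν h ν₁ p) * hδ
    have hH : Hm f ν h ν₁ p * (2 * (Et f p * Gt h p - Ft f h p ^ 2)) =
        (Et f p * Nt1 h ν₁ p - 2 * Ft f h p * Mt h ν p + Gt h p * Lt f ν p) :=
      div_mul_cancel₀ _ (mul_ne_zero two_ne_zero hp)
    have hK : Kg f ν h ν₁ p * (Et f p * Gt h p - Ft f h p ^ 2) =
        (Lt f ν p * Nt1 h ν₁ p - Mt h ν p ^ 2) := div_mul_cancel₀ _ hp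
    linear_combination (Et f p * Gt h p - Ft f h p ^ 2) * hk
      + kap f ν h ν₁ δ p * hH - hK
  have hpos0 := hHK.self_of_nhds
  have hV2 : ∀ δ : ℝ, δ ^ 2 = 1 → V2c f ν h ν₁ δ 0 ≠ 0 := by
    intro δ hδ h0
    have := hquad δ hδ 0 D0 hpos0
    unfold V2c at h0
    rw [h0, F0] at this
    apply M0
    have : Mt h ν 0 ^ 2 = 0 := by linear_combination -this
    exact pow_eq_zero_iff two_ne_zero |>.mp this
  have hVD : ∀ δ : ℝ, VD f ν h ν₁ δ (kap f ν h ν₁ ε) 0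
      = V2c f ν h ν₁ δ 0 * pv (kap f ν h ν₁ ε) 0 := by
    intro δ
    simp [VD, V1c]
  have hVDiff : (VD f ν h ν₁ ε (kap f ν h ν₁ ε) 0 = 0 ∧
      VD f ν h ν₁ (-ε) (kap f ν h ν₁ ε) 0 = 0) ↔ pv (kap f ν h ν₁ ε) 0 = 0 := by
    rw [hVD, hVD]
    constructor
    · rintro ⟨h1, -⟩
      exact (mul_eq_zero.mp h1).resolve_left (hV2 ε hε2)
    · intro h1
      rw [h1]; simp
  rw [hVDiff]
  have dD := cD.differentiable (by simp) 0
  have dH : DifferentiableAt ℝ (Hm f ν h ν₁) 0 := by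
    change DifferentiableAt ℝ (fun p => Hm f ν h ν₁ p) 0
    unfold Hm
    simp only [div_eq_mul_inv]
    have hi := (dD.const_mul 2).fun_inv (mul_ne_zero two_ne_zero D0)
    exact (((dE.mul dN).sub ((dF.const_mul 2).mul dM)).add (dG.mul dL)).mul hi
  have dK : DifferentiableAt ℝ (Kg f ν h ν₁) 0 := by
    change DifferentiableAt ℝ (fun p => Kg f ν h ν₁ p) 0
    unfold Kg
    simp only [div_eq_mul_inv]
    have hi := dD.fun_inv D0
    exact ((dL.mul dN).sub (dM.pow 2)).mul hi
  have dk : DifferentiableAt ℝ (kap f ν h ν₁ ε) 0 :=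
    dH.add ((((dH.pow 2).sub dK).sqrt hpos0.ne').const_mul ε)
  have hcont : Tendsto (fun t : ℝ => ((0 : ℝ), t)) (nhds 0) (nhds (0 : ℝ × ℝ)) := by
    have : Continuous (fun t : ℝ => ((0 : ℝ), t)) := by fun_prop
    exact this.tendsto 0
  have hq := quad_deriv (hasDerivAt_pv dE) (hasDerivAt_pv dF) (hasDerivAt_pv dG)
    (hasDerivAt_pv dL) (hasDerivAt_pv dM) (hasDerivAt_pv dN) (hasDerivAt_pv dk) (by
      filter_upwards [hcont.eventually hD, hcont.eventually hHK] with t h1 h2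
      exact hquad ε hε2 (0, t) h1 h2)
  have h00 : ((0 : ℝ), (0 : ℝ)) = 0 := rfl
  have q0 := hquad ε hε2 0 D0 hpos0
  have hW := hV2 ε hε2
  unfold V2c at hW
  have hH0 : Hm f ν h ν₁ 0 * 2 = Nt1 h ν₁ 0 + Lt f ν 0 := by
    unfold Hm; rw [E0, F0, G0]; ring
  have hS : Nt1 h ν₁ 0 + Lt f ν 0 - 2 * kap f ν h ν₁ ε 0 ≠ 0 := by
    have e1 : Nt1 h ν₁ 0 + Lt f ν 0 - 2 * kap f ν h ν₁ ε 0
        = -2 * ε * Real.sqrt (Hm f ν h ν₁ 0 ^ 2 - Kg f ν h ν₁ 0) := by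
      rw [← hH0]; unfold kap; ring
    rw [e1]
    have hεn : ε ≠ 0 := by rintro rfl; norm_num at hε2
    exact mul_ne_zero (mul_ne_zero (by norm_num) hεn) (Real.sqrt_pos.mpr hpos0).ne'
  unfold rc
  rw [h00] at hq ⊢
  rw [hE', hL', hMv] at hq
  rw [E0, F0, G0] at hq q0
  rw [E0] at hW
  have main : 24 * (pv (kap f ν h ν₁ ε) 0 * (Nt1 h ν₁ 0 + Lt f ν 0 - 2 * kap f ν h ν₁ ε 0))
      = (Lt f ν 0 - kap f ν h ν₁ ε 0 * 1) * (24 * (pv (Nt1 h ν₁) 0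
        - 2 * pv (Ft f h) 0 * Mt h ν 0 - pv (Gt h) 0 * Nt1 h ν₁ 0)) := by
    linear_combination (-24) * hq + 24 * pv (Gt h) 0 * q0
  constructor
  · intro h0
    rw [h0] at main
    have : (Lt f ν 0 - kap f ν h ν₁ ε 0 * 1) * (24 * (pv (Nt1 h ν₁) 0
        - 2 * pv (Ft f h) 0 * Mt h ν 0 - pv (Gt h) 0 * Nt1 h ν₁ 0)) = 0 := by
      rw [← main]; ring
    exact (mul_eq_zero.mp this).resolve_left hW
  · intro h0
    rw [h0, mul_zero] at main
    have := (mul_eq_zero.mp main).resolve_left (by norm_num)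
    exact (mul_eq_zero.mp this).resolve_right hS
end
end

section
/- Under the Frenet frame setup for the normal ruled surface NR(u,w) = γ̂(u) + w·ν̂(u): a point (u₀,w₀) is a singular point of NR (i.e. the partial derivatives NR_u(u₀,w₀) and NR_w(u₀,w₀) are linearly dependent, equivalently NR_u × NR_w = 0 there) if and only if κ_t(u₀) = 0 and w₀·κ_ν(u₀) = 1. -/
open Filter

noncomputable section

/-- The determinant det(a,b,c) of three vectors of ℝ³. -/
def det3 (a b c : R3) : ℝ := Matrix.det (Matrix.of ![a, b, c])

/-- Partial derivative in the `w`-direction. -/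
def pw {E : Type*} [NormedAddCommGroup E] [NormedSpace ℝ E] (F : ℝ × ℝ → E) (p : ℝ × ℝ) : E :=
  fderiv ℝ F p (0, 1)

/-- The Frenet-type frame setup along the singular locus γ̂: `{γ̂', ĥ, ν̂}` is an
orthonormal frame satisfying the Frenet-type equations with singular curvature κ_s,
limiting normal curvature κ_ν and cuspidal torsion κ_t. -/
structure FrenetSetup (γ h ν : ℝ → R3) (κs κν κt : ℝ → ℝ) : Prop where
  smooth_γ : ContDiff ℝ (⊤ : ℕ∞) γ
  smooth_h : ContDiff ℝ (⊤ : ℕ∞) h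
  smooth_ν : ContDiff ℝ (⊤ : ℕ∞) ν
  smooth_κs : ContDiff ℝ (⊤ : ℕ∞) κs
  smooth_κν : ContDiff ℝ (⊤ : ℕ∞) κν
  smooth_κt : ContDiff ℝ (⊤ : ℕ∞) κt
  unit_t : ∀ u, dot3 (deriv γ u) (deriv γ u) = 1
  unit_h : ∀ u, dot3 (h u) (h u) = 1
  unit_ν : ∀ u, dot3 (ν u) (ν u) = 1
  orth_th : ∀ u, dot3 (deriv γ u) (h u) = 0
  orth_tν : ∀ u, dot3 (deriv γ u) (ν u) = 0
  orth_hν : ∀ u, dot3 (h u) (ν u) = 0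
  frenet_t : ∀ u, deriv (deriv γ) u = κs u • h u + κν u • ν u
  frenet_h : ∀ u, deriv h u = (-κs u) • deriv γ u + κt u • ν u
  frenet_ν : ∀ u, deriv ν u = (-κν u) • deriv γ u - κt u • h u

/-- The normal ruled surface NR(u,w) = γ̂(u) + w·ν̂(u). -/
def NR (γ ν : ℝ → R3) (p : ℝ × ℝ) : R3 := γ p.1 + p.2 • ν p.1

/-- (u₀,w₀) is a singular point of the normal ruled surface NR iff
κ_t(u₀) = 0 and w₀·κ_ν(u₀) = 1. -/
theorem stmt_3 (γ h ν : ℝ → R3) (κs κν κt : ℝ → ℝ) (H : FrenetSetup γ h ν κs κν κt)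
    (u₀ w₀ : ℝ) :
    ¬ LinearIndependent ℝ ![pu (NR γ ν) (u₀, w₀), pw (NR γ ν) (u₀, w₀)] ↔
      (κt u₀ = 0 ∧ w₀ * κν u₀ = 1) := by
  have hγ : HasDerivAt γ (deriv γ u₀) u₀ :=
    ((H.smooth_γ.differentiable (by simp)) u₀).hasDerivAt
  have hν : HasDerivAt ν (deriv ν u₀) u₀ :=
    ((H.smooth_ν.differentiable (by simp)) u₀).hasDerivAt
  have h1 : HasFDerivAt (fun p : ℝ × ℝ => γ p.1) _ (u₀, w₀) :=
    HasFDerivAt.comp (g := γ) (u₀, w₀) hγ.hasFDerivAt hasFDerivAt_fst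
  have h2 : HasFDerivAt (fun p : ℝ × ℝ => ν p.1) _ (u₀, w₀) :=
    HasFDerivAt.comp (g := ν) (u₀, w₀) hν.hasFDerivAt hasFDerivAt_fst
  have h3 : HasFDerivAt (NR γ ν) _ (u₀, w₀) :=
    h1.add ((hasFDerivAt_snd (𝕜 := ℝ) (p := (u₀, w₀))).smul h2)
  have e1 : pu (NR γ ν) (u₀, w₀) = (1 - w₀ * κν u₀) • deriv γ u₀ - (w₀ * κt u₀) • h u₀ := by
    unfold pu
    rw [h3.fderiv]
    simp [H.frenet_ν]
    module
  have e2 : pw (NR γ ν) (u₀, w₀) = ν u₀ := by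
    unfold pw
    rw [h3.fderiv]
    simp
  rw [e1, e2, LinearIndependent.pair_iff]
  have a1 := H.unit_t u₀
  have a2 := H.unit_h u₀
  have a3 := H.unit_ν u₀
  have a4 := H.orth_th u₀
  have a5 := H.orth_tν u₀
  have a6 := H.orth_hν u₀
  generalize deriv γ u₀ = T at *
  generalize h u₀ = N at *
  generalize ν u₀ = V at *
  unfold dot3 at a1 a2 a3 a4 a5 a6
  constructor
  · intro hn
    by_contra hc
    apply hn
    intro s t hst
    have c0 := congrFun hst 0
    have c1 := congrFun hst 1
    have c2 := congrFun hst 2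
    simp at c0 c1 c2
    have ht : t = 0 := by
      linear_combination V 0 * c0 + V 1 * c1 + V 2 * c2 - t * a3
        - s * (1 - w₀ * κν u₀) * a5 + s * (w₀ * κt u₀) * a6
    have hT : s * (1 - w₀ * κν u₀) = 0 := by
      linear_combination T 0 * c0 + T 1 * c1 + T 2 * c2 - t * a5
        - s * (1 - w₀ * κν u₀) * a1 + s * (w₀ * κt u₀) * a4
    have hN : s * (w₀ * κt u₀) = 0 := by
      linear_combination -(N 0 * c0 + N 1 * c1 + N 2 * c2) + t * a6
        + s * (1 - w₀ * κν u₀) * a4 - s * (w₀ * κt u₀) * a2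
    refine ⟨?_, ht⟩
    by_contra hs
    apply hc
    have q1 : w₀ * κν u₀ = 1 := by
      have := (mul_eq_zero.mp hT).resolve_left hs
      linarith
    have q2 := (mul_eq_zero.mp hN).resolve_left hs
    refine ⟨(mul_eq_zero.mp q2).resolve_left ?_, q1⟩
    rintro rfl
    simp at q1
  · rintro ⟨k1, k2⟩ hl
    have := (hl 1 0 (by simp [k1, k2])).1
    exact one_ne_zero this
end
end

section
/- Under the Frenet frame setup, assume κ_t ≡ 0 (NR is developable) and κ_ν(u₀) ≠ 0, and let q = (u₀, 1/κ_ν(u₀)) (a singular point of NR). Then ĥ is a unit normal vector field of NR (⟨NR_u, ĥ⟩ = ⟨NR_w, ĥ⟩ = 0 everywhere), and the map (u,w) ↦ (NR(u,w), ĥ(u)) ∈ ℝ³ × ℝ³ is an immersion at q (i.e. NR is a front at q) if and only if κ_s(u₀) ≠ 0. -/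
open Filter

noncomputable section

theorem aux_NR (γ h ν : ℝ → R3) (κs κν κt : ℝ → ℝ) (H : FrenetSetup γ h ν κs κν κt)
    (hκt : ∀ u : ℝ, κt u = 0) (p : ℝ × ℝ) :
    ∃ L : ℝ × ℝ →L[ℝ] R3, HasFDerivAt (NR γ ν) L p ∧
      ∀ v : ℝ × ℝ, L v = (v.1 * (1 - p.2 * κν p.1)) • deriv γ p.1 + v.2 • ν p.1 := by
  have hγ : HasDerivAt γ (deriv γ p.1) p.1 :=
    ((H.smooth_γ.differentiable (by simp)) p.1).hasDerivAt
  have hν : HasDerivAt ν (deriv ν p.1) p.1 :=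
    ((H.smooth_ν.differentiable (by simp)) p.1).hasDerivAt
  have h1 : HasFDerivAt (fun q : ℝ × ℝ => q.1) (ContinuousLinearMap.fst ℝ ℝ ℝ) p := hasFDerivAt_fst
  have h2 : HasFDerivAt (fun q : ℝ × ℝ => q.2) (ContinuousLinearMap.snd ℝ ℝ ℝ) p := hasFDerivAt_snd
  have a := hγ.hasFDerivAt.comp p h1
  have b := hν.hasFDerivAt.comp p h1
  refine ⟨_, a.add (h2.smul b), ?_⟩
  intro v
  rw [H.frenet_ν, hκt]
  ext i
  simp
  ring

theorem aux_h (γ h ν : ℝ → R3) (κs κν κt : ℝ → ℝ) (H : FrenetSetup γ h ν κs κν κt)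
    (hκt : ∀ u : ℝ, κt u = 0) (p : ℝ × ℝ) :
    ∃ L : ℝ × ℝ →L[ℝ] R3, HasFDerivAt (fun q : ℝ × ℝ => h q.1) L p ∧
      ∀ v : ℝ × ℝ, L v = (-(v.1 * κs p.1)) • deriv γ p.1 := by
  have hh : HasDerivAt h (deriv h p.1) p.1 :=
    ((H.smooth_h.differentiable (by simp)) p.1).hasDerivAt
  have h1 : HasFDerivAt (fun q : ℝ × ℝ => q.1) (ContinuousLinearMap.fst ℝ ℝ ℝ) p := hasFDerivAt_fst
  refine ⟨_, hh.hasFDerivAt.comp p h1, ?_⟩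
  intro v
  rw [H.frenet_h, hκt]
  ext i
  simp
  ring

/-- if κ_t ≡ 0 and κ_ν(u₀) ≠ 0, then ĥ is a unit normal of NR, and NR is
a front at q = (u₀, 1/κ_ν(u₀)) iff κ_s(u₀) ≠ 0. -/
theorem stmt_5 (γ h ν : ℝ → R3) (κs κν κt : ℝ → ℝ) (H : FrenetSetup γ h ν κs κν κt)
    (hκt : ∀ u : ℝ, κt u = 0) (u₀ : ℝ) (hκν : κν u₀ ≠ 0) :
    (∀ p : ℝ × ℝ, dot3 (pu (NR γ ν) p) (h p.1) = 0 ∧ dot3 (pw (NR γ ν) p) (h p.1) = 0) ∧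
      (Function.Injective
          ⇑(fderiv ℝ (fun p : ℝ × ℝ => (NR γ ν p, h p.1)) (u₀, (κν u₀)⁻¹)) ↔
        κs u₀ ≠ 0) := by
  constructor
  · intro p
    obtain ⟨L, hL, e⟩ := aux_NR γ h ν κs κν κt H hκt p
    have o1 := H.orth_th p.1
    have o2 := H.orth_hν p.1
    unfold pu pw
    rw [hL.fderiv, e, e]
    simp only [dot3, Pi.add_apply, Pi.smul_apply, smul_eq_mul] at *
    constructor
    · linear_combination (1 - p.2 * κν p.1) * o1
    · linear_combination o2
  · obtain ⟨L, hL, e⟩ := aux_NR γ h ν κs κν κt H hκt (u₀, (κν u₀)⁻¹)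
    obtain ⟨M, hM, f⟩ := aux_h γ h ν κs κν κt H hκt (u₀, (κν u₀)⁻¹)
    have t1 := H.unit_t u₀
    have n1 := H.unit_ν u₀
    rw [(hL.prodMk hM).fderiv]
    simp only [inv_mul_cancel₀ hκν, sub_self, mul_zero, zero_smul, zero_add] at e f
    constructor
    · intro hi hs
      have : ((1, 0) : ℝ × ℝ) = 0 := by
        apply hi
        simp [e, f, hs]
      simp at this
    · intro hs
      rw [injective_iff_map_eq_zero]
      intro v hv
      rw [ContinuousLinearMap.prod_apply, e, f, Prod.mk_eq_zero] at hv
      obtain ⟨ha, hb⟩ := hv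
      have hν0 : ν u₀ ≠ 0 := by
        intro h0
        simp [dot3, h0] at n1
      have ht0 : deriv γ u₀ ≠ 0 := by
        intro h0
        simp [dot3, h0] at t1
      rcases smul_eq_zero.1 ha with ha | ha
      · rcases smul_eq_zero.1 hb with hb | hb
        · have : v.1 = 0 := by simpa [hs] using hb
          exact Prod.ext this ha
        · exact absurd hb ht0
      · exact absurd ha hν0
end
end
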